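/- Let p ≥ 1 and let D = {(−1,−1), (1,−1), (1,1), (−1,1)} be the set of vertices of Q = [−1,1]². For every isometry Φ : 𝒲_p(Q) → 𝒲_p(Q) there exists an isometry Ψ of (Q, d_m) such that (Φ ∘ Ψ_#)(δ_x) = δ_x for every x ∈ D. -/

import Mathlib

open MeasureTheory

/-- The `p`-Wasserstein distance between two measures, defined as the infimum over all
couplings `π` of `μ` and `ν` of `(∬ d(x,y)^p dπ)^(1/p)`. -/
noncomputable def Wdist {X : Type*} [MeasurableSpace X] [PseudoMetricSpace X] (p : ℝ)
    (μ ν : Measure X) : ℝ :=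
  (⨅ π ∈ {π : Measure (X × X) | π.map Prod.fst = μ ∧ π.map Prod.snd = ν},
    (∫⁻ q, edist q.1 q.2 ^ p ∂π) ^ (1 / p)).toReal

/-- The `p`-Wasserstein space over `X`: Borel probability measures on `X` with finite
`p`-th moment. -/
def WSet (X : Type*) [MeasurableSpace X] [PseudoMetricSpace X] (p : ℝ) : Set (Measure X) :=
  {μ | IsProbabilityMeasure μ ∧ ∃ x₀ : X, ∫⁻ x, edist x x₀ ^ p ∂μ < ⊤}

/-- An isometry of the underlying metric space: a distance-preserving bijection. -/
def IsIsom {X : Type*} [PseudoMetricSpace X] (T : X → X) : Prop :=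
  Function.Bijective T ∧ ∀ x y, dist (T x) (T y) = dist x y

/-- An isometry of the `p`-Wasserstein space over `X`: a bijection of the space of
probability measures with finite `p`-th moment preserving the Wasserstein distance. -/
def IsWIsometry (X : Type*) [MeasurableSpace X] [PseudoMetricSpace X] (p : ℝ)
    (Φ : Measure X → Measure X) : Prop :=
  Set.BijOn Φ (WSet X p) (WSet X p) ∧
    ∀ μ ∈ WSet X p, ∀ ν ∈ WSet X p, Wdist p (Φ μ) (Φ ν) = Wdist p μ ν

/-- The (topological) support of a measure. -/
def msupport {X : Type*} [TopologicalSpace X] [MeasurableSpace X] (μ : Measure X) : Set X :=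
  {x | ∀ U : Set X, IsOpen U → x ∈ U → μ U ≠ 0}

def diagLine (ε a : ℝ) : Set (ℝ × ℝ) := {z | z.2 = ε * z.1 + a}

def Lplus : Set (ℝ × ℝ) := {z | z.2 = z.1}

def Lminus : Set (ℝ × ℝ) := {z | z.2 = -z.1}

/-- The closed square `Q = [-1,1]²`. -/
abbrev Qs : Set (ℝ × ℝ) := Set.Icc (-1, -1) (1, 1)

def LplusQ : Set ↥Qs := {q | (q : ℝ × ℝ).2 = (q : ℝ × ℝ).1}

def LminusQ : Set ↥Qs := {q | (q : ℝ × ℝ).2 = -(q : ℝ × ℝ).1}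


/-- The four corners of `Q = [-1,1]²`. -/
def cLL : ↥Qs := ⟨(-1, -1), by constructor <;> simp [Prod.le_def]⟩
def cLR : ↥Qs := ⟨(1, -1), by constructor <;> simp [Prod.le_def]⟩
def cUR : ↥Qs := ⟨(1, 1), by constructor <;> simp [Prod.le_def]⟩
def cUL : ↥Qs := ⟨(-1, 1), by constructor <;> simp [Prod.le_def]⟩


namespace CornersAux

open scoped ENNReal

instance : OpensMeasurableSpace ↥Qs := inferInstance

lemma mem_bd (x : ↥Qs) : -1 ≤ x.1.1 ∧ x.1.1 ≤ 1 ∧ -1 ≤ x.1.2 ∧ x.1.2 ≤ 1 := by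
  obtain ⟨⟨a, b⟩, h⟩ := x
  simp only [Qs, Set.mem_Icc, Prod.le_def] at h
  exact ⟨h.1.1, h.2.1, h.1.2, h.2.2⟩

def mk (a b : ℝ) (ha : |a| ≤ 1) (hb : |b| ≤ 1) : ↥Qs :=
  ⟨(a, b), by
    rw [abs_le] at ha hb
    exact ⟨⟨ha.1, hb.1⟩, ⟨ha.2, hb.2⟩⟩⟩

lemma dist_eq (x y : ↥Qs) : dist x y = max |x.1.1 - y.1.1| |x.1.2 - y.1.2| := rfl

lemma dist_le_two (x y : ↥Qs) : dist x y ≤ 2 := by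
  have hx := mem_bd x
  have hy := mem_bd y
  rw [dist_eq]
  refine max_le ?_ ?_ <;> rw [abs_le] <;> constructor <;> linarith

lemma edist_le_two (x y : ↥Qs) : edist x y ≤ 2 := by
  rw [edist_dist]
  have := ENNReal.ofReal_le_ofReal (dist_le_two x y)
  simpa using this

lemma edist_two_iff (x y : ↥Qs) : edist x y = 2 ↔ dist x y = 2 := by
  rw [edist_dist]
  constructor
  · intro h
    have := congrArg ENNReal.toReal h
    rwa [ENNReal.toReal_ofReal dist_nonneg] at this
  · intro h
    rw [h]
    simp

/-- distance two, in coordinates -/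
lemma dist_two_iff (x y : ↥Qs) : dist x y = 2 ↔
    (x.1.1 = 1 ∧ y.1.1 = -1) ∨ (x.1.1 = -1 ∧ y.1.1 = 1) ∨
    (x.1.2 = 1 ∧ y.1.2 = -1) ∨ (x.1.2 = -1 ∧ y.1.2 = 1) := by
  have hx := mem_bd x
  have hy := mem_bd y
  rw [dist_eq]
  constructor
  · intro h
    rcases max_choice |x.1.1 - y.1.1| |x.1.2 - y.1.2| with h1 | h1 <;> rw [h1] at h <;>
      rcases abs_choice (x.1.1 - y.1.1) with h2 | h2 <;>
      rcases abs_choice (x.1.2 - y.1.2) with h3 | h3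
    · exact Or.inl ⟨by linarith, by linarith⟩
    · exact Or.inl ⟨by linarith, by linarith⟩
    · exact Or.inr (Or.inl ⟨by linarith, by linarith⟩)
    · exact Or.inr (Or.inl ⟨by linarith, by linarith⟩)
    · exact Or.inr (Or.inr (Or.inl ⟨by linarith, by linarith⟩))
    · exact Or.inr (Or.inr (Or.inr ⟨by linarith, by linarith⟩))
    · exact Or.inr (Or.inr (Or.inl ⟨by linarith, by linarith⟩))
    · exact Or.inr (Or.inr (Or.inr ⟨by linarith, by linarith⟩))
  · intro h
    have hle : max |x.1.1 - y.1.1| |x.1.2 - y.1.2| ≤ 2 := by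
      have := dist_le_two x y
      rwa [dist_eq] at this
    refine le_antisymm hle ?_
    rcases h with ⟨h1, h2⟩ | ⟨h1, h2⟩ | ⟨h1, h2⟩ | ⟨h1, h2⟩
    · refine le_max_of_le_left ?_
      rw [h1, h2]; norm_num
    · refine le_max_of_le_left ?_
      rw [h1, h2]; norm_num
    · refine le_max_of_le_right ?_
      rw [h1, h2]; norm_num
    · refine le_max_of_le_right ?_
      rw [h1, h2]; norm_num

def IsC (x : ↥Qs) : Prop := (x.1.1 = 1 ∨ x.1.1 = -1) ∧ (x.1.2 = 1 ∨ x.1.2 = -1)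

lemma ext' {x y : ↥Qs} (h1 : x.1.1 = y.1.1) (h2 : x.1.2 = y.1.2) : x = y :=
  Subtype.ext (Prod.ext h1 h2)

lemma isC_iff (x : ↥Qs) : IsC x ↔ (x = cLL ∨ x = cLR ∨ x = cUR ∨ x = cUL) := by
  constructor
  · rintro ⟨h1 | h1, h2 | h2⟩
    · exact Or.inr (Or.inr (Or.inl (ext' h1 h2)))
    · exact Or.inr (Or.inl (ext' h1 h2))
    · exact Or.inr (Or.inr (Or.inr (ext' h1 h2)))
    · exact Or.inl (ext' h1 h2)
  · rintro (rfl | rfl | rfl | rfl) <;> simp [IsC, cLL, cLR, cUR, cUL]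

/-- distance two for coordinates -/
def F (x1 x2 y1 y2 : ℝ) : Prop :=
  (x1 = 1 ∧ y1 = -1) ∨ (x1 = -1 ∧ y1 = 1) ∨ (x2 = 1 ∧ y2 = -1) ∨ (x2 = -1 ∧ y2 = 1)

lemma dist_F (x y : ↥Qs) : dist x y = 2 ↔ F x.1.1 x.1.2 y.1.1 y.1.2 := dist_two_iff x y

lemma real1 (x1 x2 z1 z2 : ℝ) (hz : F x1 x2 z1 z2) (c1 c2 : ℝ)
    (h1 : (x1 = 1 ∧ c1 = 1) ∨ (x1 ≠ 1 ∧ c1 = -1)) (h2 : (x2 = 1 ∧ c2 = 1) ∨ (x2 ≠ 1 ∧ c2 = -1)) :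
    F c1 c2 z1 z2 := by
  unfold F at *
  grind

lemma real2 (c1 c2 : ℝ) (h1 : c1 = 1 ∨ c1 = -1) : F c1 c2 (-c1) 0 := by
  unfold F
  rcases h1 with h | h <;> simp [h]

lemma real3 (c1 c2 : ℝ) (h1 : c2 = 1 ∨ c2 = -1) : F c1 c2 0 (-c2) := by
  unfold F
  rcases h1 with h | h <;> simp [h]

lemma real4 (c1 c2 x1 x2 : ℝ) (h1 : c1 = 1 ∨ c1 = -1) (h2 : c2 = 1 ∨ c2 = -1)
    (hy : F x1 x2 (-c1) 0) (hz : F x1 x2 0 (-c2)) : x1 = c1 ∧ x2 = c2 := by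
  unfold F at *
  grind

lemma real5 (x1 x2 y1 y2 : ℝ) (h1 : x1 = 1 ∨ x1 = -1) (h2 : x2 = 1 ∨ x2 = -1)
    (f1 : F x1 x2 y1 y2) (f2 : F (-x1) (-x2) y1 y2) :
    (y1 = x1 ∧ y2 = -x2) ∨ (y1 = -x1 ∧ y2 = x2) := by
  unfold F at *
  rcases h1 with rfl | rfl <;> rcases h2 with rfl | rfl <;> norm_num at * <;> grind

lemma F1 (x1 x2 y1 y2 : ℝ) (h1 : x1 = 1 ∨ x1 = -1) (h : y1 = -x1) : F x1 x2 y1 y2 := by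
  unfold F
  rcases h1 with h' | h' <;> simp [h, h']

lemma F2 (x1 x2 y1 y2 : ℝ) (h1 : x2 = 1 ∨ x2 = -1) (h : y2 = -x2) : F x1 x2 y1 y2 := by
  unfold F
  rcases h1 with h' | h' <;> simp [h, h']

lemma pm (a b : ℝ) (ha : a = 1 ∨ a = -1) (hb : b = 1 ∨ b = -1) : b = a ∨ b = -a := by
  rcases ha with rfl | rfl <;> rcases hb with rfl | rfl <;> simp

lemma real6 (a1 a2 c1 c2 d1 d2 : ℝ) (ha1 : a1 = 1 ∨ a1 = -1) (ha2 : a2 = 1 ∨ a2 = -1)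
    (hc1 : c1 = 1 ∨ c1 = -1) (hc2 : c2 = 1 ∨ c2 = -1)
    (hd1 : d1 = 1 ∨ d1 = -1) (hd2 : d2 = 1 ∨ d2 = -1)
    (m2 : ¬ (a1 = c1 ∧ a2 = c2)) (m3 : ¬ (-a1 = c1 ∧ -a2 = c2))
    (m4 : ¬ (a1 = d1 ∧ a2 = d2)) (m5 : ¬ (-a1 = d1 ∧ -a2 = d2))
    (m6 : ¬ (c1 = d1 ∧ c2 = d2)) :
    (c1 = a1 ∧ c2 = -a2 ∧ d1 = -a1 ∧ d2 = a2) ∨ (c1 = -a1 ∧ c2 = a2 ∧ d1 = a1 ∧ d2 = -a2) := by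
  rcases pm _ _ ha1 hc1 with rfl | rfl <;> rcases pm _ _ ha2 hc2 with rfl | rfl <;>
  rcases pm _ _ ha1 hd1 with rfl | rfl <;> rcases pm _ _ ha2 hd2 with rfl | rfl <;>
  simp_all

lemma dom_corner (x y : ↥Qs) (h : dist x y = 2) :
    ∃ c, (c = cLL ∨ c = cLR ∨ c = cUR ∨ c = cUL) ∧ ∀ z, dist x z = 2 → dist c z = 2 := by
  simp only [dist_F] at h ⊢
  by_cases h1 : x.1.1 = 1
  · by_cases h2 : x.1.2 = 1
    · exact ⟨cUR, by simp, fun z hz => real1 _ _ _ _ hz _ _ (Or.inl ⟨h1, rfl⟩) (Or.inl ⟨h2, rfl⟩)⟩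
    · exact ⟨cLR, by simp, fun z hz => real1 _ _ _ _ hz _ _ (Or.inl ⟨h1, rfl⟩) (Or.inr ⟨h2, rfl⟩)⟩
  · by_cases h2 : x.1.2 = 1
    · exact ⟨cUL, by simp, fun z hz => real1 _ _ _ _ hz _ _ (Or.inr ⟨h1, rfl⟩) (Or.inl ⟨h2, rfl⟩)⟩
    · exact ⟨cLL, by simp, fun z hz => real1 _ _ _ _ hz _ _ (Or.inr ⟨h1, rfl⟩) (Or.inr ⟨h2, rfl⟩)⟩

/-- a corner is determined by two midpoints -/
lemma corner_det (c : ↥Qs) (hc : IsC c) :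
    ∃ y z : ↥Qs, dist c y = 2 ∧ dist c z = 2 ∧
      ∀ x : ↥Qs, dist x y = 2 → dist x z = 2 → x = c := by
  obtain ⟨h1, h2⟩ := hc
  refine ⟨mk (-c.1.1) 0 (by rcases h1 with h | h <;> simp [h]) (by simp),
    mk 0 (-c.1.2) (by simp) (by rcases h2 with h | h <;> simp [h]), ?_, ?_, ?_⟩
  · rw [dist_F]; exact real2 _ _ h1
  · rw [dist_F]; exact real3 _ _ h2
  · intro x hy hz
    rw [dist_F] at hy hz
    have := real4 _ _ _ _ h1 h2 hy hz
    exact ext' this.1 this.2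

lemma ae_two (p : ℝ) (hp : 1 ≤ p) (μ ν : Measure ↥Qs) [IsProbabilityMeasure μ]
    [IsProbabilityMeasure ν] (h : Wdist p μ ν = 2) :
    ∀ᵐ x ∂μ, ∀ᵐ y ∂ν, dist x y = 2 := by
  have hp0 : 0 < p := by linarith
  unfold Wdist at h
  have h := (ENNReal.toReal_eq_toReal_iff' (y := 2)
    (fun ht => by rw [ht] at h; norm_num at h) (by norm_num)).1 (h.trans (by norm_num))
  have h2 : (2 : ℝ≥0∞) ≤ (∫⁻ q, edist q.1 q.2 ^ p ∂(μ.prod ν)) ^ (1 / p) := by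
    rw [← h]
    exact iInf₂_le (μ.prod ν) ⟨by simp, by simp⟩
  have h3 : (2 : ℝ≥0∞) ^ p ≤ ∫⁻ q, edist q.1 q.2 ^ p ∂(μ.prod ν) := by
    have := ENNReal.rpow_le_rpow h2 hp0.le
    rwa [← ENNReal.rpow_mul, one_div_mul_cancel hp0.ne', ENNReal.rpow_one] at this
  have h4 : (fun q : ↥Qs × ↥Qs => edist q.1 q.2 ^ p) =ᵐ[μ.prod ν] fun _ => (2 : ℝ≥0∞) ^ p := by
    refine ae_eq_of_ae_le_of_lintegral_le ?_ ?_ ?_ ?_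
    · exact Filter.Eventually.of_forall fun q =>
        ENNReal.rpow_le_rpow (edist_le_two _ _) hp0.le
    · refine ne_of_lt (lt_of_le_of_lt (lintegral_mono (g := fun _ => (2 : ℝ≥0∞) ^ p) fun q =>
        ENNReal.rpow_le_rpow (edist_le_two _ _) hp0.le) ?_)
      simpa using ENNReal.rpow_lt_top_of_nonneg hp0.le (by norm_num)
    · fun_prop
    · simpa using h3
  have h5 : ∀ᵐ q ∂(μ.prod ν), dist q.1 q.2 = 2 := by
    filter_upwards [h4] with q hq
    rw [← edist_two_iff]
    have := congrArg (fun t : ℝ≥0∞ => t ^ (1 / p)) hq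
    simpa [← ENNReal.rpow_mul, hp0.ne'] using this
  exact Measure.ae_ae_of_ae_prod h5

lemma W_dirac (p : ℝ) (a : ↥Qs) (ν : Measure ↥Qs) [IsProbabilityMeasure ν] :
    Wdist p (Measure.dirac a) ν = ((∫⁻ y, edist a y ^ p ∂ν) ^ (1 / p)).toReal := by
  unfold Wdist
  congr 1
  have key : ∀ π : Measure (↥Qs × ↥Qs),
      π.map Prod.fst = Measure.dirac a ∧ π.map Prod.snd = ν →
      ∫⁻ q, edist q.1 q.2 ^ p ∂π = ∫⁻ y, edist a y ^ p ∂ν := by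
    rintro π ⟨h1, h2⟩
    have ha : ∀ᵐ q ∂π, q.1 = a := by
      have : ∀ᵐ x ∂(π.map Prod.fst), x = a := by
        rw [h1, ae_dirac_eq]; simp
      exact ae_of_ae_map measurable_fst.aemeasurable this
    rw [← h2, lintegral_map (by fun_prop) measurable_snd]
    refine lintegral_congr_ae ?_
    filter_upwards [ha] with q hq
    rw [hq]
  refine le_antisymm ?_ ?_
  · have hm : (Measure.dirac a).prod ν ∈ {π : Measure (↥Qs × ↥Qs) |
        π.map Prod.fst = Measure.dirac a ∧ π.map Prod.snd = ν} := ⟨by simp, by simp⟩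
    refine (iInf₂_le _ hm).trans ?_
    rw [key _ hm]
  · refine le_iInf₂ fun π hπ => ?_
    rw [key π hπ]

lemma W_dirac_two (p : ℝ) (hp : 1 ≤ p) (a : ↥Qs) (ν : Measure ↥Qs) [IsProbabilityMeasure ν]
    (h : ∀ᵐ y ∂ν, dist a y = 2) : Wdist p (Measure.dirac a) ν = 2 := by
  have hp0 : 0 < p := by linarith
  rw [W_dirac]
  have : ∫⁻ y, edist a y ^ p ∂ν = 2 ^ p := by
    have : ∫⁻ y, edist a y ^ p ∂ν = ∫⁻ y, (2 : ℝ≥0∞) ^ p ∂ν := by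
      refine lintegral_congr_ae ?_
      filter_upwards [h] with y hy
      rw [(edist_two_iff a y).2 hy]
    rw [this]; simp
  rw [this, ← ENNReal.rpow_mul, mul_one_div_cancel hp0.ne']
  simp

lemma mem_WSet (p : ℝ) (hp : 1 ≤ p) (μ : Measure ↥Qs) [IsProbabilityMeasure μ] :
    μ ∈ WSet ↥Qs p := by
  have hp0 : 0 < p := by linarith
  refine ⟨inferInstance, cLL, ?_⟩
  refine lt_of_le_of_lt (lintegral_mono (g := fun _ => (2 : ℝ≥0∞) ^ p) fun q =>
        ENNReal.rpow_le_rpow (edist_le_two _ _) hp0.le) ?_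
  simpa using ENNReal.rpow_lt_top_of_nonneg hp0.le (by norm_num)

lemma eq_dirac (μ : Measure ↥Qs) [IsProbabilityMeasure μ] (c : ↥Qs)
    (h : ∀ᵐ x ∂μ, x = c) : μ = Measure.dirac c := by
  have h1 : μ.map id = μ.map (fun _ => c) := Measure.map_congr h
  simpa using h1

/-- maximality of the corner masses -/
lemma corner_max (p : ℝ) (hp : 1 ≤ p) (c : ↥Qs) (hc : IsC c) (μ : Measure ↥Qs)
    [IsProbabilityMeasure μ]
    (h : ∀ ν ∈ WSet ↥Qs p, Wdist p (Measure.dirac c) ν = 2 → Wdist p μ ν = 2) :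
    μ = Measure.dirac c := by
  obtain ⟨y, z, hy, hz, hx⟩ := corner_det c hc
  have aux : ∀ w, dist c w = 2 → ∀ᵐ x ∂μ, dist x w = 2 := by
    intro w hw
    have h1 := ae_two p hp μ (Measure.dirac w) (h _ (mem_WSet p hp _)
      (W_dirac_two p hp c _ (by rw [ae_dirac_eq]; simpa using hw)))
    filter_upwards [h1] with x hx
    rw [ae_dirac_eq] at hx
    simpa using hx
  apply eq_dirac
  filter_upwards [aux y hy, aux z hz] with x h1 h2
  exact hx x h1 h2

lemma exists_dom (p : ℝ) (hp : 1 ≤ p) (μ ν₀ : Measure ↥Qs)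
    [IsProbabilityMeasure μ] [IsProbabilityMeasure ν₀] (h0 : Wdist p μ ν₀ = 2) :
    ∃ c, IsC c ∧ ∀ ν ∈ WSet ↥Qs p, Wdist p μ ν = 2 → Wdist p (Measure.dirac c) ν = 2 := by
  let S : ↥Qs → Set ↥Qs := fun c => {x | ∀ z, dist x z = 2 → dist c z = 2}
  have hpos : ∃ c, IsC c ∧ μ (S c) ≠ 0 := by
    by_contra! hcon
    have e : ∀ c, IsC c → ∀ᵐ x ∂μ, x ∉ S c := fun c hc => by
      rw [ae_iff]; simpa using hcon c hc
    have hf : ∀ᵐ x ∂μ, False := by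
      filter_upwards [ae_two p hp μ ν₀ h0, e cLL (by simp [isC_iff]), e cLR (by simp [isC_iff]),
        e cUR (by simp [isC_iff]), e cUL (by simp [isC_iff])] with x hx h1 h2 h3 h4
      obtain ⟨y, hy⟩ := hx.exists
      obtain ⟨c, hc, hcz⟩ := dom_corner x y hy
      rcases hc with rfl | rfl | rfl | rfl
      · exact h1 hcz
      · exact h2 hcz
      · exact h3 hcz
      · exact h4 hcz
    exact hf.exists.choose_spec
  obtain ⟨c, hc, hS⟩ := hpos
  refine ⟨c, hc, fun ν hν h => ?_⟩
  have : IsProbabilityMeasure ν := hν.1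
  have h1 := ae_two p hp μ ν h
  have h2 : ∃ x ∈ S c, ∀ᵐ y ∂ν, dist x y = 2 := by
    by_contra! hcon
    apply hS
    refine measure_mono_null (t := {x | ¬ ∀ᵐ y ∂ν, dist x y = 2}) ?_ (ae_iff.1 h1)
    intro x hx
    exact fun h' => (hcon x hx) (h'.mono fun y hy => not_not.2 hy)
  obtain ⟨x, hx, hxy⟩ := h2
  apply W_dirac_two p hp
  filter_upwards [hxy] with y hy
  exact hx y hy

/-- preimages of corner masses are corner masses -/
lemma exists_pre (p : ℝ) (hp : 1 ≤ p) (Φ : Measure ↥Qs → Measure ↥Qs)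
    (hΦ : IsWIsometry ↥Qs p Φ) (x : ↥Qs) (hx : IsC x) :
    ∃ c, IsC c ∧ Φ (Measure.dirac c) = Measure.dirac x := by
  obtain ⟨hbij, hiso⟩ := hΦ
  obtain ⟨m, hm, hmx⟩ := hbij.surjOn (mem_WSet p hp (Measure.dirac x))
  have : IsProbabilityMeasure m := hm.1
  obtain ⟨y, z, hy, -, -⟩ := corner_det x hx
  obtain ⟨ν₀, hν, hνy⟩ := hbij.surjOn (mem_WSet p hp (Measure.dirac y))
  have : IsProbabilityMeasure ν₀ := hν.1
  have h0 : Wdist p m ν₀ = 2 := by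
    rw [← hiso m hm ν₀ hν, hmx, hνy]
    exact W_dirac_two p hp x _ (by rw [ae_dirac_eq]; simpa using hy)
  obtain ⟨c, hc, hdom⟩ := exists_dom p hp m ν₀ h0
  refine ⟨c, hc, ?_⟩
  have hcW := mem_WSet p hp (Measure.dirac c)
  have : IsProbabilityMeasure (Φ (Measure.dirac c)) := (hbij.mapsTo hcW).1
  apply corner_max p hp x hx
  intro ν hν h
  obtain ⟨n, hn, rfl⟩ := hbij.surjOn hν
  rw [hiso _ hcW _ hn]
  apply hdom n hn
  rw [← hiso m hm n hn, hmx, h]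

/-- opposite corners: uniqueness -/
lemma opp_unique (p : ℝ) (hp : 1 ≤ p) (x x' a : ↥Qs) (hx : IsC x)
    (h1 : x'.1.1 = - x.1.1) (h2 : x'.1.2 = - x.1.2) (ha1 : a.1.1 = x.1.1) (ha2 : a.1.2 = -x.1.2)
    (ν ν' : Measure ↥Qs) [IsProbabilityMeasure ν] [IsProbabilityMeasure ν']
    (hν1 : Wdist p (Measure.dirac x) ν = 2) (hν2 : Wdist p (Measure.dirac x') ν = 2)
    (hν1' : Wdist p (Measure.dirac x) ν' = 2) (hν2' : Wdist p (Measure.dirac x') ν' = 2)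
    (h : Wdist p (Measure.dirac a) ν = Wdist p (Measure.dirac a) ν') : ν = ν' := by
  have hp0 : 0 < p := by linarith
  obtain ⟨hx1, hx2⟩ := hx
  let b : ↥Qs := mk (-x.1.1) x.1.2 (by rcases hx1 with h | h <;> simp [h])
    (by rcases hx2 with h | h <;> simp [h])
  have hab : dist a b = 2 := by
    rw [dist_F]; exact F1 _ _ _ _ (by rw [ha1]; exact hx1) (by rw [ha1]; rfl)
  have hne : a ≠ b := by
    intro h; rw [h] at hab; simp at hab
  have rep : ∀ n : Measure ↥Qs, IsProbabilityMeasure n → Wdist p (Measure.dirac x) n = 2 →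
      Wdist p (Measure.dirac x') n = 2 →
      n = (1 - n {b}) • Measure.dirac a + n {b} • Measure.dirac b ∧
      ∫⁻ y, edist a y ^ p ∂n = 2 ^ p * n {b} := by
    intro n hn g1 g2
    have hae : ∀ᵐ y ∂n, y = a ∨ y = b := by
      have e1 := ae_two p hp _ _ g1
      have e2 := ae_two p hp _ _ g2
      rw [ae_dirac_eq] at e1 e2
      have e1 : ∀ᵐ y ∂n, dist x y = 2 := by simpa using e1
      have e2 : ∀ᵐ y ∂n, dist x' y = 2 := by simpa using e2
      filter_upwards [e1, e2] with y f1 f2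
      rw [dist_F] at f1 f2
      rw [h1, h2] at f2
      rcases real5 _ _ _ _ hx1 hx2 f1 f2 with h | h
      · exact Or.inl (ext' (h.1.trans ha1.symm) (h.2.trans ha2.symm))
      · exact Or.inr (ext' h.1 h.2)
    have hr : n.restrict ({a} ∪ {b}) = n := by
      apply Measure.restrict_eq_self_of_ae_mem
      filter_upwards [hae] with y hy
      exact hy
    have hdis : Disjoint ({a} : Set ↥Qs) {b} := by simpa using hne
    have hn1 : n {a} + n {b} = 1 := by
      rw [← measure_union hdis (measurableSet_singleton b), ← measure_univ (μ := n)]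
      refine measure_congr ?_
      filter_upwards [hae] with y hy
      apply propext
      constructor
      · intro _; trivial
      · intro _; exact hy
    have hna : n {a} = 1 - n {b} := by
      rw [← hn1, ENNReal.add_sub_cancel_right (measure_ne_top n _)]
    have hrep : n = (1 - n {b}) • Measure.dirac a + n {b} • Measure.dirac b := by
      conv_lhs => rw [← hr]
      rw [Measure.restrict_union hdis (measurableSet_singleton b), Measure.restrict_singleton,
        Measure.restrict_singleton, hna]
    refine ⟨hrep, ?_⟩
    have : ∫⁻ y, edist a y ^ p ∂n = ∫⁻ y, edist a y ^ p
        ∂((1 - n {b}) • Measure.dirac a + n {b} • Measure.dirac b) := by rw [← hrep]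
    rw [this, lintegral_add_measure, lintegral_smul_measure, lintegral_smul_measure,
      lintegral_dirac, lintegral_dirac, (edist_two_iff a b).2 hab]
    simp [hp0, mul_comm]
  obtain ⟨r1, i1⟩ := rep ν inferInstance hν1 hν2
  obtain ⟨r2, i2⟩ := rep ν' inferInstance hν1' hν2'
  rw [W_dirac, W_dirac, i1, i2] at h
  have t0 : (2 : ℝ≥0∞) ^ p ≠ 0 := by simp [hp0.le]
  have tt : (2 : ℝ≥0∞) ^ p ≠ ⊤ := by simp [hp0.le]
  have fin : ∀ n : Measure ↥Qs, IsProbabilityMeasure n →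
      ((2 : ℝ≥0∞) ^ p * n {b}) ^ (1 / p) ≠ ⊤ := fun n hn =>
    ENNReal.rpow_ne_top_of_nonneg (by positivity) (ENNReal.mul_ne_top tt (measure_ne_top n _))
  have h := (ENNReal.toReal_eq_toReal_iff' (fin ν inferInstance) (fin ν' inferInstance)).1 h
  have h := ENNReal.rpow_left_injective (x := 1 / p) (by positivity) h
  have h := (ENNReal.mul_right_inj t0 tt).1 h
  rw [r1, r2, h]

/-- adjacent corners: non-uniqueness -/
lemma adj_nonunique (p : ℝ) (hp : 1 ≤ p) (u v w : ↥Qs) (hu : IsC u) (hv : IsC v) (hw : IsC w)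
    (huv : u ≠ v) (huw : u ≠ w) (hvw : v ≠ w) (hadj : ¬ (v.1.1 = -u.1.1 ∧ v.1.2 = -u.1.2)) :
    ∃ ν ν' : Measure ↥Qs, IsProbabilityMeasure ν ∧ IsProbabilityMeasure ν' ∧
      Wdist p (Measure.dirac u) ν = 2 ∧ Wdist p (Measure.dirac v) ν = 2 ∧
      Wdist p (Measure.dirac u) ν' = 2 ∧ Wdist p (Measure.dirac v) ν' = 2 ∧
      Wdist p (Measure.dirac w) ν = Wdist p (Measure.dirac w) ν' ∧ ν ≠ ν' := by
  have hp0 : 0 < p := by linarith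
  have geo : ∃ y w' : ↥Qs, dist u y = 2 ∧ dist v y = 2 ∧ dist u w = 2 ∧ dist v w = 2 ∧
      dist u w' = 2 ∧ dist v w' = 2 ∧ dist w y = 1 ∧ dist w w' = 2 := by
    have huw' : ¬ (u.1.1 = w.1.1 ∧ u.1.2 = w.1.2) := fun h => huw (ext' h.1 h.2)
    have hvw' : ¬ (v.1.1 = w.1.1 ∧ v.1.2 = w.1.2) := fun h => hvw (ext' h.1 h.2)
    have huv' : ¬ (u.1.1 = v.1.1 ∧ u.1.2 = v.1.2) := fun h => huv (ext' h.1 h.2)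
    obtain ⟨hu1, hu2⟩ := hu
    obtain ⟨hv1, hv2⟩ := hv
    obtain ⟨hw1, hw2⟩ := hw
    rcases pm _ _ hu1 hv1 with hc | hc
    · have hv4 : v.1.2 = -u.1.2 := by
        rcases pm _ _ hu2 hv2 with h | h
        · exact absurd ⟨hc.symm, h.symm⟩ huv'
        · exact h
      have hw3 : w.1.1 = -u.1.1 := by
        rcases pm _ _ hu1 hw1 with h | h
        · rcases pm _ _ hu2 hw2 with h' | h'
          · exact absurd ⟨h.symm, h'.symm⟩ huw'
          · exact absurd ⟨hc.trans h.symm, hv4.trans h'.symm⟩ hvw'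
        · exact h
      have hw4 : w.1.1 = -v.1.1 := by rw [hw3, hc]
      refine ⟨mk w.1.1 0 (by rcases hw1 with h | h <;> simp [h]) (by simp),
        mk w.1.1 (-w.1.2) (by rcases hw1 with h | h <;> simp [h])
        (by rcases hw2 with h | h <;> simp [h]), ?_⟩
      simp only [dist_F]
      refine ⟨F1 _ _ _ _ hu1 hw3, F1 _ _ _ _ hv1 hw4, F1 _ _ _ _ hu1 hw3, F1 _ _ _ _ hv1 hw4,
        F1 _ _ _ _ hu1 hw3, F1 _ _ _ _ hv1 hw4, ?_, F2 _ _ _ _ hw2 rfl⟩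
      rw [dist_eq]
      rcases hw2 with h | h <;> simp [h, mk]
    · have hv4 : v.1.2 = u.1.2 := by
        rcases pm _ _ hu2 hv2 with h | h
        · exact h
        · exact absurd ⟨hc, h⟩ hadj
      have hw3 : w.1.2 = -u.1.2 := by
        rcases pm _ _ hu2 hw2 with h | h
        · rcases pm _ _ hu1 hw1 with h' | h'
          · exact absurd ⟨h'.symm, h.symm⟩ huw'
          · exact absurd ⟨hc.trans h'.symm, hv4.trans h.symm⟩ hvw'
        · exact h
      have hw4 : w.1.2 = -v.1.2 := by rw [hw3, hv4]
      refine ⟨mk 0 w.1.2 (by simp) (by rcases hw2 with h | h <;> simp [h]),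
        mk (-w.1.1) w.1.2 (by rcases hw1 with h | h <;> simp [h])
        (by rcases hw2 with h | h <;> simp [h]), ?_⟩
      simp only [dist_F]
      refine ⟨F2 _ _ _ _ hu2 hw3, F2 _ _ _ _ hv2 hw4, F2 _ _ _ _ hu2 hw3, F2 _ _ _ _ hv2 hw4,
        F2 _ _ _ _ hu2 hw3, F2 _ _ _ _ hv2 hw4, ?_, F1 _ _ _ _ hw1 rfl⟩
      rw [dist_eq]
      rcases hw1 with h | h <;> simp [h, mk]
  obtain ⟨y, w', huy, hvy, hu, hv, hu', hv', hwy, hww⟩ := geo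
  have t0 : (2 : ℝ≥0∞) ^ p ≠ 0 := by simp [hp0.le]
  have tt : (2 : ℝ≥0∞) ^ p ≠ ⊤ := by simp [hp0.le]
  let r : ℝ≥0∞ := (2 ^ p)⁻¹
  have hr1 : r ≤ 1 := by
    simp only [r, ENNReal.inv_le_one]
    exact ENNReal.one_le_rpow (by norm_num) hp0
  let n : Measure ↥Qs := (1 - r) • Measure.dirac w + r • Measure.dirac w'
  have hn : IsProbabilityMeasure n := ⟨by simp [n, tsub_add_cancel_of_le hr1]⟩
  have hae : ∀ q : ↥Qs, dist q w = 2 → dist q w' = 2 → ∀ᵐ z ∂n, dist q z = 2 := by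
    intro q h1 h2
    rw [ae_add_measure_iff]
    constructor
    · apply Measure.ae_smul_measure
      rw [ae_dirac_eq]; simpa using h1
    · apply Measure.ae_smul_measure
      rw [ae_dirac_eq]; simpa using h2
  refine ⟨Measure.dirac y, n, inferInstance, hn,
    W_dirac_two p hp _ _ (by rw [ae_dirac_eq]; simpa using huy),
    W_dirac_two p hp _ _ (by rw [ae_dirac_eq]; simpa using hvy),
    W_dirac_two p hp _ _ (hae u hu hu'), W_dirac_two p hp _ _ (hae v hv hv'), ?_, ?_⟩
  · rw [W_dirac, W_dirac, lintegral_dirac, lintegral_add_measure, lintegral_smul_measure,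
      lintegral_smul_measure, lintegral_dirac, lintegral_dirac, (edist_two_iff w w').2 hww,
      edist_dist w y, hwy]
    simp [hp0, r, ENNReal.inv_mul_cancel t0 tt]
  · intro h
    have h1 : n {w'} = 0 := by
      rw [← h, Measure.dirac_apply]
      have : y ≠ w' := by
        rintro rfl
        linarith
      simp [this]
    have h2 : r ≤ n {w'} := by
      simp [n]
    rw [h1] at h2
    have : r ≠ 0 := ENNReal.inv_ne_zero.2 tt
    exact this (le_antisymm h2 bot_le)

lemma isom_of (f : ↥Qs → ↥Qs) (h : ∀ x y, dist (f x) (f y) = dist x y)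
    (g : ↥Qs → ↥Qs) (hg : ∀ x, f (g x) = x) : IsIsom f := by
  refine ⟨⟨fun x y hxy => ?_, fun x => ⟨g x, hg x⟩⟩, h⟩
  rw [← dist_eq_zero, ← h, hxy, dist_self]

end CornersAux

open CornersAux in
/-- For every isometry `Φ` of `𝒲_p(Q, d_m)` there is an isometry `Ψ` of `(Q, d_m)` such
that `Φ ∘ Ψ_#` fixes the Dirac masses at the four corners of `Q`. -/
theorem corners_can_be_fixed (p : ℝ) (hp : 1 ≤ p)
    (Φ : Measure ↥Qs → Measure ↥Qs) (hΦ : IsWIsometry ↥Qs p Φ) :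
    ∃ Ψ : ↥Qs → ↥Qs, IsIsom Ψ ∧
      ∀ x : ↥Qs, (x = cLL ∨ x = cLR ∨ x = cUR ∨ x = cUL) →
        Φ ((Measure.dirac x).map Ψ) = Measure.dirac x := by
  have hiso := hΦ.2
  have hbij := hΦ.1
  have C1 : IsC cUR := by simp [isC_iff]
  have C2 : IsC cLL := by simp [isC_iff]
  have C3 : IsC cLR := by simp [isC_iff]
  have C4 : IsC cUL := by simp [isC_iff]
  obtain ⟨a, ha, ea⟩ := exists_pre p hp Φ hΦ cUR C1
  obtain ⟨b, hb, eb⟩ := exists_pre p hp Φ hΦ cLL C2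
  obtain ⟨c, hc, ec⟩ := exists_pre p hp Φ hΦ cLR C3
  obtain ⟨d, hd, ed⟩ := exists_pre p hp Φ hΦ cUL C4
  have inj : ∀ {s t x y : ↥Qs}, Φ (Measure.dirac s) = Measure.dirac x →
      Φ (Measure.dirac t) = Measure.dirac y → x ≠ y → s ≠ t := by
    intro s t x y h1 h2 h3 h4
    rw [h4, h2] at h1
    exact h3 (MeasureTheory.dirac_eq_dirac_iff.1 h1).symm
  have n1 : a ≠ b := inj ea eb (by intro h; have := congrArg (fun z => z.1.1) h; norm_num [cUR, cLL] at this)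
  have n2 : a ≠ c := inj ea ec (by intro h; have := congrArg (fun z => z.1.2) h; norm_num [cUR, cLR] at this)
  have n3 : b ≠ c := inj eb ec (by intro h; have := congrArg (fun z => z.1.1) h; norm_num [cLR, cLL] at this)
  have n4 : a ≠ d := inj ea ed (by intro h; have := congrArg (fun z => z.1.1) h; norm_num [cUR, cUL] at this)
  have n5 : b ≠ d := inj eb ed (by intro h; have := congrArg (fun z => z.1.2) h; norm_num [cUL, cLL] at this)
  have n6 : c ≠ d := inj ec ed (by intro h; have := congrArg (fun z => z.1.1) h; norm_num [cUL, cLR] at this)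
  have opp : b.1.1 = -a.1.1 ∧ b.1.2 = -a.1.2 := by
    by_contra hadj
    obtain ⟨ν, ν', hν, hν', h1, h2, h3, h4, h5, h6⟩ :=
      adj_nonunique p hp a b c ha hb hc n1 n2 n3 hadj
    have W := mem_WSet p hp ν
    have W' := mem_WSet p hp ν'
    have := (hbij.mapsTo W).1
    have := (hbij.mapsTo W').1
    apply h6
    apply hbij.injOn W W'
    have Wa := mem_WSet p hp (Measure.dirac a)
    have Wb := mem_WSet p hp (Measure.dirac b)
    have Wc := mem_WSet p hp (Measure.dirac c)
    refine opp_unique p hp cUR cLL cLR C1 (by simp [cUR, cLL]) (by simp [cUR, cLL])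
      (by simp [cUR, cLR]) (by simp [cUR, cLR]) _ _ ?_ ?_ ?_ ?_ ?_
    · rw [← ea, hiso _ Wa _ W, h1]
    · rw [← eb, hiso _ Wb _ W, h2]
    · rw [← ea, hiso _ Wa _ W', h3]
    · rw [← eb, hiso _ Wb _ W', h4]
    · rw [← ec, hiso _ Wc _ W, hiso _ Wc _ W', h5]
  have ne : ∀ {s t : ↥Qs}, s ≠ t → ¬ (s.1.1 = t.1.1 ∧ s.1.2 = t.1.2) :=
    fun h h' => h (ext' h'.1 h'.2)
  have m2 := ne n2
  have m3 := ne n3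
  have m4 := ne n4
  have m5 := ne n5
  have m6 := ne n6
  obtain ⟨ha1, ha2⟩ := ha
  obtain ⟨hc1, hc2⟩ := hc
  obtain ⟨hd1, hd2⟩ := hd
  obtain ⟨o1, o2⟩ := opp
  have A1 : |a.1.1| = 1 := by rcases ha1 with h | h <;> simp [h]
  have A2 : |a.1.2| = 1 := by rcases ha2 with h | h <;> simp [h]
  have s1 : a.1.1 * a.1.1 = 1 := by rcases ha1 with h | h <;> simp [h]
  have s2 : a.1.2 * a.1.2 = 1 := by rcases ha2 with h | h <;> simp [h]
  have X1 : ∀ x : ↥Qs, |x.1.1| ≤ 1 := fun x => abs_le.2 ⟨(mem_bd x).1, (mem_bd x).2.1⟩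
  have X2 : ∀ x : ↥Qs, |x.1.2| ≤ 1 := fun x => abs_le.2 ⟨(mem_bd x).2.2.1, (mem_bd x).2.2.2⟩
  have fin : ∀ Ψ : ↥Qs → ↥Qs, IsIsom Ψ → Ψ cUR = a → Ψ cLL = b → Ψ cLR = c → Ψ cUL = d →
      ∃ Ψ : ↥Qs → ↥Qs, IsIsom Ψ ∧
      ∀ x : ↥Qs, (x = cLL ∨ x = cLR ∨ x = cUR ∨ x = cUL) →
        Φ ((Measure.dirac x).map Ψ) = Measure.dirac x := by
    intro Ψ hΨ e1 e2 e3 e4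
    have hm : Measurable Ψ := (Isometry.of_dist_eq hΨ.2).continuous.measurable
    refine ⟨Ψ, hΨ, ?_⟩
    intro x hx
    rw [Measure.map_dirac' hm]
    rcases hx with rfl | rfl | rfl | rfl
    · rw [e2, eb]
    · rw [e3, ec]
    · rw [e1, ea]
    · rw [e4, ed]
  rw [o1, o2] at m3 m5
  rcases real6 _ _ _ _ _ _ ha1 ha2 hc1 hc2 hd1 hd2 m2 m3 m4 m5 m6 with
    ⟨hcase, c2, d1, d2⟩ | ⟨c1, c2, d1, d2⟩
  · let f : ↥Qs → ↥Qs := fun x => mk (a.1.1 * x.1.1) (a.1.2 * x.1.2)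
      (by rw [abs_mul, A1, one_mul]; exact X1 x) (by rw [abs_mul, A2, one_mul]; exact X2 x)
    refine fin f (isom_of f ?_ f ?_) ?_ ?_ ?_ ?_
    · intro x y
      simp only [dist_eq, f, mk, ← mul_sub, abs_mul, A1, A2, one_mul]
    · intro x
      apply ext' <;> simp only [f, mk, ← mul_assoc, s1, s2, one_mul]
    · apply ext' <;> simp [f, mk, cUR]
    · apply ext' <;> simp [f, mk, cLL, o1, o2]
    · apply ext' <;> simp [f, mk, cLR, hcase, c2]
    · apply ext' <;> simp [f, mk, cUL, d1, d2]
  · let f : ↥Qs → ↥Qs := fun x => mk (a.1.1 * x.1.2) (a.1.2 * x.1.1)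
      (by rw [abs_mul, A1, one_mul]; exact X2 x) (by rw [abs_mul, A2, one_mul]; exact X1 x)
    let g : ↥Qs → ↥Qs := fun x => mk (a.1.2 * x.1.2) (a.1.1 * x.1.1)
      (by rw [abs_mul, A2, one_mul]; exact X2 x) (by rw [abs_mul, A1, one_mul]; exact X1 x)
    refine fin f (isom_of f ?_ g ?_) ?_ ?_ ?_ ?_
    · intro x y
      simp only [dist_eq, f, mk, ← mul_sub, abs_mul, A1, A2, one_mul]
      exact max_comm _ _
    · intro x
      apply ext' <;> simp only [f, g, mk, ← mul_assoc, s1, s2, one_mul]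
    · apply ext' <;> simp [f, mk, cUR]
    · apply ext' <;> simp [f, mk, cLL, o1, o2]
    · apply ext' <;> simp [f, mk, cLR, c1, c2]
    · apply ext' <;> simp [f, mk, cUL, d1, d2]
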